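/- arXiv:1505.03210 — 5 statements merged into one kernel-verified Lean document; each statement's English description precedes it below -/
import Mathlib

section
/- (Compression of trees) Let H be a hypergraph tree with tree-defining ordering E_1,…,E_m and parent function α. Fix i with 2 ≤ i ≤ m, and suppose x ∈ E_i ∖ E_{α(i)} and y ∈ E_{α(i)} ∖ E_i. For each j = 1,…,m define E'_j = (E_j ∖ {x}) ∪ {y} if x ∈ E_j, and E'_j = E_j otherwise. Then the list E'_1,…,E'_m is a tree-defining ordering of a hypergraph tree H' (with the same parent function α). -/
/-!
Write `v` for a vertex of `E' j` that also lies in some earlier `E' k`. If `v ≠ y`, then `v ≠ x`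
too, so membership of `v` in the edges is unaffected by the compression and the parent condition
for `E` applies. For `v = y` one needs: if each of `E j` and `E k` contains `x` or `y`, then so does
`E (a j)`. This is the parent condition when `E j` and `E k` share `x` or share `y`. The mixed cases
use that no edge before `E i` contains `x` (otherwise `x ∈ E (a i)`):

* if `x ∈ E j` and `y ∈ E k`, then either `j = i`, where `y ∈ E (a i)`, or `i < j`, and `x` is
  already shared with the earlier edge `E i`;
* if `y ∈ E j` and `x ∈ E k`, then `a i < i ≤ k < j`, and `y` is shared with the earlier
  edge `E (a i)`.
-/

open Finset
open scoped Classical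

noncomputable section

variable {α β : Type*}

/-- The vertex set of a hypergraph given by its finite edge set. -/
def hverts [DecidableEq α] (H : Finset (Finset α)) : Finset α := H.sup id

/-- `E 0, E 1, …, E (m-1)` is a tree-defining ordering: every edge after the first
has a parent among the earlier edges containing its intersection with the union of
all earlier edges. -/
def IsTreeOrder {m : ℕ} [DecidableEq α] (E : Fin m → Finset α) : Prop :=
  ∀ i : Fin m, 0 < i.1 → ∃ j : Fin m, j < i ∧ E i ∩ (Finset.Iio i).sup E ⊆ E j

/-- A tight tree-defining ordering for an `r`-uniform hypergraph. -/
def IsTightTreeOrder {m : ℕ} [DecidableEq α] (r : ℕ) (E : Fin m → Finset α) : Prop :=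
  ∀ i : Fin m, 0 < i.1 → ∃ j : Fin m, j < i ∧ E i ∩ (Finset.Iio i).sup E ⊆ E j ∧
    (E i ∩ E j).card = r - 1

/-- `H` is an `r`-tree: its edges admit a tree-defining ordering (with multiplicities
allowed in the ordering), and all edges have `r` vertices. -/
def IsRTree [DecidableEq α] (r : ℕ) (H : Finset (Finset α)) : Prop :=
  ∃ (m : ℕ) (E : Fin m → Finset α),
    H = Finset.image E Finset.univ ∧ IsTreeOrder E ∧ ∀ i, (E i).card = r

/-- `H` is a tight `r`-tree. -/
def IsTightRTree [DecidableEq α] (r : ℕ) (H : Finset (Finset α)) : Prop :=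
  ∃ (m : ℕ) (E : Fin m → Finset α),
    H = Finset.image E Finset.univ ∧ IsTightTreeOrder r E ∧ ∀ i, (E i).card = r

/-- The degree of a vertex: the number of edges containing it. -/
def hdeg [DecidableEq α] (H : Finset (Finset α)) (x : α) : ℕ :=
  (H.filter (fun E => x ∈ E)).card

/-- `H` is `k`-reducible: every edge contains at least `k` vertices of degree 1. -/
def Reducible [DecidableEq α] (k : ℕ) (H : Finset (Finset α)) : Prop :=
  ∀ E ∈ H, k ≤ (E.filter (fun x => hdeg H x = 1)).card

/-- `S` is a cross-cut of `H`: it meets every edge in exactly one vertex. -/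
def IsCrossCut [DecidableEq α] (H : Finset (Finset α)) (S : Finset α) : Prop :=
  ∀ E ∈ H, (E ∩ S).card = 1

/-- The cross-cut number: minimum size of a cross-cut. -/
def crossCutNum [DecidableEq α] (H : Finset (Finset α)) : ℕ :=
  sInf {k | ∃ S : Finset α, IsCrossCut H S ∧ S.card = k}

/-- `S` is a vertex cover of `H`. -/
def IsVertexCover [DecidableEq α] (H : Finset (Finset α)) (S : Finset α) : Prop :=
  ∀ E ∈ H, (E ∩ S).Nonempty

/-- The vertex cover number: minimum size of a vertex cover. -/
def coverNum [DecidableEq α] (H : Finset (Finset α)) : ℕ :=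
  sInf {k | ∃ S : Finset α, IsVertexCover H S ∧ S.card = k}

/-- `G` contains a copy of `H`, i.e. `H` is embeddable in `G`. -/
def ContainsCopy [DecidableEq α] [DecidableEq β] (G : Finset (Finset β))
    (H : Finset (Finset α)) : Prop :=
  ∃ f : α → β, Set.InjOn f ↑(H.sup id) ∧ ∀ E ∈ H, E.image f ∈ G

/-- The Turán number `ex(n, H)`: the maximum size of an `r`-uniform family on `[n]`
containing no copy of `H`. -/
def exNum [DecidableEq α] (n r : ℕ) (H : Finset (Finset α)) : ℕ :=
  sSup {N | ∃ F : Finset (Finset (Fin n)), (∀ E ∈ F, E.card = r) ∧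
    ¬ ContainsCopy F H ∧ F.card = N}


/-- Compression of trees: replacing `x` by `y` (with `x ∈ E i ∖ E (a i)`,
`y ∈ E (a i) ∖ E i`) in every edge containing `x` again yields a tree-defining
ordering, with the same parent function. -/
theorem tree_compression {α : Type*} [DecidableEq α]
    (m : ℕ) (E : Fin m → Finset α) (a : Fin m → Fin m)
    (hpar : ∀ i : Fin m, 0 < i.1 → a i < i ∧ E i ∩ (Finset.Iio i).sup E ⊆ E (a i))
    (i : Fin m) (hi : 0 < i.1)
    (x y : α) (hx : x ∈ E i) (hx' : x ∉ E (a i)) (hy : y ∈ E (a i)) (hy' : y ∉ E i)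
    (E' : Fin m → Finset α)
    (hE' : ∀ j : Fin m, E' j = if x ∈ E j then insert y ((E j).erase x) else E j) :
    ∀ j : Fin m, 0 < j.1 → a j < j ∧ E' j ∩ (Finset.Iio j).sup E' ⊆ E' (a j) := by
  have par : ∀ j k : Fin m, k < j → ∀ v, v ∈ E j → v ∈ E k → v ∈ E (a j) := by
    intro j k hkj v hj hk
    have hj0 : 0 < j.1 := lt_of_le_of_lt (Nat.zero_le _) (Fin.lt_def.mp hkj)
    exact (hpar j hj0).2
      (mem_inter.2 ⟨hj, Finset.mem_sup.2 ⟨k, Finset.mem_Iio.2 hkj, hk⟩⟩)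
  have first : ∀ k, x ∈ E k → i ≤ k := fun k hk =>
    not_lt.1 fun h => hx' (par i k h x hx hk)
  have memy : ∀ j, y ∈ E' j ↔ x ∈ E j ∨ y ∈ E j := by
    intro j
    rw [hE' j]
    split_ifs with h <;> simp [h]
  have memv : ∀ j v, v ≠ y → (v ∈ E' j ↔ v ≠ x ∧ v ∈ E j) := by
    intro j v hv
    rw [hE' j]
    split_ifs with h
    · simp [hv]
    · exact ⟨fun hm => ⟨fun e => h (e ▸ hm), hm⟩, fun hm => hm.2⟩
  intro j hj
  refine ⟨(hpar j hj).1, fun v hv => ?_⟩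
  obtain ⟨hvj, hvs⟩ := mem_inter.1 hv
  obtain ⟨k, hk, hvk⟩ := Finset.mem_sup.1 hvs
  have hkj : k < j := Finset.mem_Iio.1 hk
  by_cases hvy : v = y
  · subst hvy
    rw [memy] at hvj hvk ⊢
    rcases hvj with hxj | hyj
    · rcases (first j hxj).eq_or_lt with rfl | hij
      · exact Or.inr hy
      · exact Or.inl (par j i hij x hxj hx)
    · rcases hvk with hxk | hyk
      · have hlt : a i < j := (hpar i hi).1.trans ((first k hxk).trans_lt hkj)
        exact Or.inr (par j (a i) hlt v hyj hy)
      · exact Or.inr (par j k hkj v hyj hyk)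
  · rw [memv _ _ hvy] at hvj hvk ⊢
    exact ⟨hvj.1, par j k hkj v hvj.2 hvk.2⟩

end
end

section
/- (Smallest hosting tree) Let H be an r-graph embeddable in an r-tree T, and let V_1,…,V_r be a compatible r-partition of V(T). For each i = 1,…,r let X_i = V_i ∩ V(H). Then there exists an r-tree G containing H as a subgraph such that V(G) = V(H) and X_1,…,X_r is a compatible r-partition of G. -/
/-! The tree `T` is shrunk onto `V(H)` by merging, one at a time, each vertex `v` of `V(T)` outside
`V(H)` into a vertex `w` of the same color. Edges of `H` avoid `v`, so they survive the merge; since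
an edge never contains two vertices of the same color, edges keep their size and stay compatible
with the partition.

The merged sequence of edges is again a tree order, with the same parents, provided that
every edge introducing one of `v`, `w` after the other has already appeared has a parent containing
`v` or `w` (`isTreeOrder_merge`). Such a `w` always exists (`exists_merge_target`). If `v` first
appears in an edge `E i` with `0 < i`, take `w` in the parent of `E i`. If `v` lies in the first
edge, let `E j` be the first edge avoiding `v` (there is one, as edges of `H` avoid `v`) and take `w`
in `E j`; then `w` is new at `j` and the parent of `E j` contains `v`. Induction on the number of
vertices outside `V(H)` finishes the proof. All this is for nonempty `H`; otherwise the empty tree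
works. -/

open Finset
open scoped Classical

noncomputable section

variable {α β : Type*}

section MergeVertices

variable [DecidableEq α]

/-- The map merging `v` into `w` and fixing every other vertex. -/
def mergeMap (v w x : α) : α := if x = v then w else x

lemma isTreeOrder_iff {m : ℕ} (E : Fin m → Finset α) :
    IsTreeOrder E ↔ ∀ i : Fin m, 0 < i.1 → ∃ j, j < i ∧
      ∀ a ∈ E i, ∀ l < i, a ∈ E l → a ∈ E j := by
  unfold IsTreeOrder
  refine forall_congr' fun i => imp_congr_right fun _ => exists_congr fun j =>
    and_congr_right fun _ => ?_
  simp only [Finset.subset_iff, Finset.mem_inter, Finset.mem_sup, Finset.mem_Iio]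
  constructor
  · intro h a ha l hl hal
    exact h ⟨ha, l, hl, hal⟩
  · rintro h a ⟨ha, l, hl, hal⟩
    exact h a ha l hl hal

/-- A sufficient condition for merging `v` into `w` to preserve a tree order: the only new
intersections are those created by the identification `v = w`, and hypothesis `h` lets the
parents absorb them. -/
lemma isTreeOrder_merge {m : ℕ} (E : Fin m → Finset α) (v w : α)
    (h : ∀ i : Fin m, 0 < i.1 → ∃ j, j < i ∧ (∀ a ∈ E i, ∀ l < i, a ∈ E l → a ∈ E j) ∧
      ((v ∈ E i ∧ ∃ l < i, w ∈ E l) ∨ (w ∈ E i ∧ ∃ l < i, v ∈ E l) → v ∈ E j ∨ w ∈ E j)) :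
    IsTreeOrder (fun i => (E i).image (mergeMap v w)) := by
  rw [isTreeOrder_iff]
  intro i hi
  obtain ⟨j, hj, h1, h2⟩ := h i hi
  refine ⟨j, hj, ?_⟩
  intro x hx l hl hxl
  simp only [Finset.mem_image] at hx hxl ⊢
  obtain ⟨a, ha, rfl⟩ := hx
  obtain ⟨b, hb, hab⟩ := hxl
  by_cases e : a = b
  · subst e
    exact ⟨a, h1 a ha l hl hb, rfl⟩
  · have hvw : (a = v ∧ b = w) ∨ (a = w ∧ b = v) := by
      unfold mergeMap at hab
      grind
    have hj' : v ∈ E j ∨ w ∈ E j := by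
      apply h2
      rcases hvw with ⟨rfl, rfl⟩ | ⟨rfl, rfl⟩
      · exact Or.inl ⟨ha, l, hl, hb⟩
      · exact Or.inr ⟨ha, l, hl, hb⟩
    have hxw : mergeMap v w a = w := by
      unfold mergeMap
      grind
    rw [hxw]
    rcases hj' with h' | h'
    · exact ⟨v, h', by simp [mergeMap]⟩
    · exact ⟨w, h', by simp [mergeMap]⟩

/-- A vertex `v` missed by some edge `E q` can be merged into another vertex `w` of its own color
class `C` without destroying the tree order. -/
lemma exists_merge_target {m : ℕ} (E : Fin m → Finset α) (hE : IsTreeOrder E) (C : Finset α)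
    (hC : ∀ i, (E i ∩ C).card = 1) (v : α) (hvC : v ∈ C) (p q : Fin m) (hp : v ∈ E p)
    (hq : v ∉ E q) :
    ∃ w ∈ C, w ≠ v ∧ (∃ i, w ∈ E i) ∧
      IsTreeOrder (fun i => (E i).image (mergeMap v w)) := by
  rw [isTreeOrder_iff] at hE
  have hex : ∀ i, ∃ w ∈ C, w ∈ E i := by
    intro i
    obtain ⟨w, hw⟩ := Finset.card_eq_one.1 (hC i)
    have : w ∈ E i ∩ C := by simp [hw]
    exact ⟨w, (Finset.mem_inter.1 this).2, (Finset.mem_inter.1 this).1⟩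
  have huniq : ∀ i, ∀ a ∈ C, ∀ b ∈ C, a ∈ E i → b ∈ E i → a = b := by
    intro i a ha b hb hai hbi
    exact Finset.card_le_one.1 (hC i).le a (by simp [*]) b (by simp [*])
  obtain ⟨f, hf, hfmin⟩ : ∃ f, v ∈ E f ∧ ∀ l < f, v ∉ E l := by
    obtain ⟨f, hf, hmin⟩ := WellFounded.has_min (wellFounded_lt (α := Fin m))
      {i | v ∈ E i} ⟨p, hp⟩
    exact ⟨f, hf, fun l hl h => hmin l h hl⟩
  by_cases hf0 : 0 < f.1
  · obtain ⟨k, hk, hk'⟩ := hE f hf0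
    obtain ⟨w, hwC, hwk⟩ := hex k
    have hwv : w ≠ v := by
      rintro rfl
      exact hfmin k hk hwk
    refine ⟨w, hwC, hwv, ⟨k, hwk⟩, isTreeOrder_merge E v w ?_⟩
    intro i hi
    rcases eq_or_ne i f with rfl | hif
    · exact ⟨k, hk, hk', fun _ => Or.inr hwk⟩
    · obtain ⟨j, hj, hj'⟩ := hE i hi
      refine ⟨j, hj, hj', ?_⟩
      rintro (⟨h1, l, hl, h2⟩ | ⟨h1, l, hl, h2⟩)
      · have : f < i := lt_of_le_of_ne (not_lt.1 fun h => hfmin i h h1) (Ne.symm hif)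
        exact Or.inl (hj' v h1 f this hf)
      · -- `w` appeared before `f`, and `f ≤ l < i`.
        have : f ≤ l := not_lt.1 fun h => hfmin l h h2
        exact Or.inr (hj' w h1 k (hk.trans (this.trans_lt hl)) hwk)
  · obtain ⟨g, hg, hgmin⟩ : ∃ g, v ∉ E g ∧ ∀ l < g, v ∈ E l := by
      obtain ⟨g, hg, hmin⟩ := WellFounded.has_min (wellFounded_lt (α := Fin m))
        {i | v ∉ E i} ⟨q, hq⟩
      exact ⟨g, hg, fun l hl => by_contra fun h => hmin l h hl⟩
    obtain ⟨w, hwC, hwg⟩ := hex g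
    have hwv : w ≠ v := by
      rintro rfl
      exact hg hwg
    refine ⟨w, hwC, hwv, ⟨g, hwg⟩, isTreeOrder_merge E v w ?_⟩
    intro i hi
    obtain ⟨j, hj, hj'⟩ := hE i hi
    refine ⟨j, hj, hj', ?_⟩
    rintro (⟨h1, l, hl, h2⟩ | ⟨h1, l, hl, h2⟩)
    · have : f < i := Fin.lt_def.2 (by omega)
      exact Or.inl (hj' v h1 f this hf)
    · rcases lt_trichotomy i g with h | h | h
      · exact absurd (huniq i w hwC v hvC h1 (hgmin i h)) hwv
      · subst h
        exact Or.inl (hgmin j hj)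
      · exact Or.inr (hj' w h1 g h hwg)

/-- Iterated merging: the edges of the resulting tree order lie in `V(H)`, still include those of
`H`, and are transversals of the color classes. -/
lemma exists_shrunk_order {r m : ℕ} (H : Finset (Finset α)) (hH : H.Nonempty)
    (V : Fin r → Finset α) (hdisj : ∀ i j : Fin r, i ≠ j → Disjoint (V i) (V j)) (n : ℕ) :
    ∀ E : Fin m → Finset α, ((Finset.univ.sup E) \ H.sup id).card = n → IsTreeOrder E →
      (∀ i, (E i).card = r) → (∀ i, E i ⊆ Finset.univ.sup V) →
      (∀ i c, (E i ∩ V c).card = 1) → (∀ A ∈ H, ∃ i, E i = A) →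
      ∃ F : Fin m → Finset α, IsTreeOrder F ∧ (∀ i, (F i).card = r) ∧
        (∀ i, F i ⊆ Finset.univ.sup V) ∧ (∀ i c, (F i ∩ V c).card = 1) ∧
        (∀ A ∈ H, ∃ i, F i = A) ∧ ∀ i, F i ⊆ H.sup id := by
  induction n using Nat.strong_induction_on with
  | _ n ih =>
  intro E hn hE hr hV hc hHE
  by_cases hsub : ∀ i, E i ⊆ H.sup id
  · exact ⟨E, hE, hr, hV, hc, hHE, hsub⟩
  push Not at hsub
  obtain ⟨p, hp⟩ := hsub
  obtain ⟨v, hvp, hvH⟩ := Finset.not_subset.1 hp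
  have hvA : ∀ A ∈ H, v ∉ A := fun A hA hv => hvH (Finset.mem_sup.2 ⟨A, hA, hv⟩)
  obtain ⟨A₀, hA₀⟩ := hH
  obtain ⟨q, hq⟩ := hHE A₀ hA₀
  obtain ⟨c, -, hvc⟩ := Finset.mem_sup.1 (hV p hvp)
  obtain ⟨w, hwc, hwv, ⟨k, hwk⟩, hord⟩ := exists_merge_target E hE (V c) (fun i => hc i c) v hvc p q
    hvp (by rw [hq]; exact hvA A₀ hA₀)
  have hmem : ∀ x d, mergeMap v w x ∈ V d ↔ x ∈ V d := by
    intro x d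
    unfold mergeMap
    split_ifs with hx
    · subst hx
      by_cases hd : d = c
      · subst hd
        simp [hvc, hwc]
      · have := Finset.disjoint_left.1 (hdisj d c hd)
        exact ⟨fun h => absurd hwc (this h), fun h => absurd hvc (this h)⟩
    · rfl
  have hinj : ∀ i, Set.InjOn (mergeMap v w) (E i : Set α) := by
    intro i a ha b hb hab
    by_contra hne
    have key : ¬ (v ∈ E i ∧ w ∈ E i) := fun h =>
      hwv (Finset.card_le_one.1 (hc i c).le w (by simp [*]) v (by simp [*]))
    rw [Finset.mem_coe] at ha hb
    unfold mergeMap at hab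
    grind
  refine ih _ ?_ (fun i => (E i).image (mergeMap v w)) rfl hord ?_ ?_ ?_ ?_
  · rw [← hn]
    apply Finset.card_lt_card
    rw [Finset.ssubset_iff_of_subset]
    · refine ⟨v, ?_, ?_⟩
      · simp only [Finset.mem_sdiff, Finset.mem_sup]
        exact ⟨⟨p, Finset.mem_univ _, hvp⟩, by simpa [Finset.mem_sup] using hvH⟩
      · simp only [Finset.mem_sdiff, Finset.mem_sup, Finset.mem_image, mergeMap]
        grind
    · intro x
      simp only [Finset.mem_sdiff, Finset.mem_sup, Finset.mem_image, mergeMap, Finset.mem_univ,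
        true_and]
      rintro ⟨⟨i, a, ha, hax⟩, hx⟩
      refine ⟨?_, hx⟩
      split_ifs at hax
      · exact ⟨k, hax ▸ hwk⟩
      · exact ⟨i, hax ▸ ha⟩
  · intro i
    rw [Finset.card_image_of_injOn (hinj i), hr i]
  · intro i x hx
    obtain ⟨a, ha, rfl⟩ := Finset.mem_image.1 hx
    obtain ⟨d, hd, had⟩ := Finset.mem_sup.1 (hV i ha)
    exact Finset.mem_sup.2 ⟨d, hd, (hmem a d).2 had⟩
  · intro i d
    have : (E i).image (mergeMap v w) ∩ V d = (E i ∩ V d).image (mergeMap v w) := by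
      ext x
      simp only [Finset.mem_inter, Finset.mem_image]
      constructor
      · rintro ⟨⟨a, ha, rfl⟩, hx⟩
        exact ⟨a, ⟨ha, (hmem a d).1 hx⟩, rfl⟩
      · rintro ⟨a, ⟨ha, hd⟩, rfl⟩
        exact ⟨⟨a, ha, rfl⟩, (hmem a d).2 hd⟩
    rw [this, Finset.card_image_of_injOn ((hinj i).mono (by simp)), hc i d]
  · intro A hA
    obtain ⟨i, rfl⟩ := hHE A hA
    refine ⟨i, ?_⟩
    have hv := hvA _ hA
    ext x
    simp only [Finset.mem_image, mergeMap]
    grind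

end MergeVertices

/-- Smallest hosting tree: if `H` is a subgraph of an `r`-tree `T` with compatible
`r`-partition `V 0, …, V (r-1)`, then there is an `r`-tree `G` containing `H` with
`V(G) = V(H)` for which `i ↦ V i ∩ V(H)` is a compatible `r`-partition. -/
theorem smallest_hosting_tree {α : Type*} [DecidableEq α]
    (r : ℕ) (T H : Finset (Finset α))
    (hT : IsRTree r T) (hHT : H ⊆ T)
    (V : Fin r → Finset α)
    (hdisj : ∀ i j : Fin r, i ≠ j → Disjoint (V i) (V j))
    (hcover : Finset.univ.sup V = T.sup id)
    (hcomp : ∀ A ∈ T, ∀ i : Fin r, (A ∩ V i).card = 1) :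
    ∃ G : Finset (Finset α), IsRTree r G ∧ H ⊆ G ∧ G.sup id = H.sup id ∧
      (Finset.univ.sup (fun i => V i ∩ H.sup id) = G.sup id) ∧
      ∀ A ∈ G, ∀ i : Fin r, (A ∩ (V i ∩ H.sup id)).card = 1 := by
  obtain ⟨m, E, hTE, hE, hr⟩ := hT
  rcases H.eq_empty_or_nonempty with rfl | hne
  · refine ⟨∅, ⟨0, fun i => i.elim0, by simp, fun i => i.elim0, fun i => i.elim0⟩, ?_⟩
    simp only [Finset.sup_empty, Finset.bot_eq_empty, Finset.inter_empty]
    refine ⟨subset_rfl, trivial, Finset.sup_bot _, by simp⟩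
  have hET : ∀ i, E i ∈ T := by
    intro i
    rw [hTE]
    exact Finset.mem_image_of_mem _ (Finset.mem_univ _)
  obtain ⟨F, hF, hFr, hFV, hFc, hFH, hFs⟩ := exists_shrunk_order H hne V hdisj _ E rfl hE hr
    (fun i => by
      rw [hcover]
      exact fun x hx => Finset.mem_sup.2 ⟨E i, hET i, hx⟩)
    (fun i c => hcomp _ (hET i) c)
    (fun A hA => by
      have := hHT hA
      rw [hTE] at this
      obtain ⟨i, -, hi⟩ := Finset.mem_image.1 this
      exact ⟨i, hi⟩)
  have hHF : H ⊆ Finset.image F Finset.univ := by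
    intro A hA
    obtain ⟨i, hi⟩ := hFH A hA
    exact Finset.mem_image.2 ⟨i, Finset.mem_univ _, hi⟩
  have hsup : (Finset.image F Finset.univ).sup id = H.sup id := by
    apply le_antisymm
    · apply Finset.sup_le
      intro A hA
      obtain ⟨i, -, rfl⟩ := Finset.mem_image.1 hA
      exact hFs i
    · exact Finset.sup_mono hHF
  refine ⟨Finset.image F Finset.univ, ⟨m, F, rfl, hF, hFr⟩, hHF, hsup, ?_, ?_⟩
  · rw [hsup]
    apply le_antisymm
    · exact Finset.sup_le fun i _ => Finset.inter_subset_right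
    · intro x hx
      obtain ⟨A, hA, hxA⟩ := Finset.mem_sup.1 hx
      obtain ⟨i, rfl⟩ := hFH A hA
      obtain ⟨c, hc, hxc⟩ := Finset.mem_sup.1 (hFV i hxA)
      exact Finset.mem_sup.2 ⟨c, hc, Finset.mem_inter.2 ⟨hxc, hx⟩⟩
  · intro A hA c
    obtain ⟨i, -, rfl⟩ := Finset.mem_image.1 hA
    have : F i ∩ (V c ∩ H.sup id) = F i ∩ V c := by
      ext x
      have := @hFs i x
      simp only [Finset.mem_inter]
      tauto
    rw [this, hFc i c]

end
end

section
/- (The trace of a tree) Let G be a hypergraph tree and S ⊆ V(G). Then the trace G|_S, whose edges are the sets E ∩ S for E an edge of G, and G − S = G|_{V(G)∖S}, whose edges are the sets E ∖ S for E an edge of G, are both hypergraph trees. -/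
open Finset
open scoped Classical

noncomputable section

variable {α β : Type*}

/-- The trace of a tree: for a tree-defining ordering `E` and any vertex set `S`, both
the trace `j ↦ E j ∩ S` and the deletion `j ↦ E j ∖ S` are tree-defining orderings. -/
theorem trace_of_tree {α : Type*} [DecidableEq α]
    (m : ℕ) (E : Fin m → Finset α) (hord : IsTreeOrder E) (S : Finset α) :
    IsTreeOrder (fun j => E j ∩ S) ∧ IsTreeOrder (fun j => E j \ S) := by
  -- Intersecting with `S` and removing `S` both keep exactly the vertices satisfying a fixed
  -- predicate, so the parent of each edge in `E` is still a parent after the operation.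
  constructor <;>
  · intro i hi
    obtain ⟨j, hj, hsub⟩ := hord i hi
    refine ⟨j, hj, fun x hx => ?_⟩
    have key : x ∈ E i ∩ (Finset.Iio i).sup E → x ∈ E j := fun h => hsub h
    simp only [Finset.mem_inter, Finset.mem_sdiff, Finset.mem_sup] at hx key ⊢
    obtain ⟨⟨hxi, hxS⟩, k, hk, hxk, -⟩ := hx
    exact ⟨key ⟨hxi, k, hk, hxk⟩, hxS⟩

end
end

section
/- (Deleting a cross-cut) Let r ≥ 3 and let H be an r-graph embeddable in a 1-reducible r-tree T (with H a subgraph of T). Let S be a cross-cut of H. Then the hypergraph H − S, whose edges are the sets E ∖ S for E an edge of H (each an (r−1)-set), is embeddable in an (r−1)-tree whose vertex set equals the vertex set of H − S. -/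
/-!
Let `V` be the vertex set of `H - S`. Intersecting the edges of a tree ordering of `T` with `V`
preserves the tree ordering. Every trace `E ∩ V` has at most `r - 1` vertices: if `E ∈ H` the
vertex of `E` in `S` is lost, and if `E ∉ H` a degree-one vertex of `E` is lost, because it lies in
no edge of `H`. For `E ∈ H` the trace is `E \ S`, with exactly `r - 1` vertices.

It remains to complete a tree-ordered family of sets of size at most `k`, on at least `k` vertices,
to a `k`-tree on the same vertices such that every member of the family is contained in an edge
(`exists_rtree_of_treeOrder`); members of size exactly `k` are then edges. This goes by
induction on the number of sets. If the sets before the last one cover at least `k` vertices, the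
last set is enlarged to a `k`-set inside its union with an edge containing its parent, and appended.
Otherwise two edges suffice: one containing the vertices covered so far and one containing the last
set, and any two edges form a tree.
-/

open Finset
open scoped Classical

noncomputable section

variable {α β : Type*}

/-- A new edge whose intersection with the current vertex set lies in one existing edge can be
appended to an `r`-tree. -/
lemma IsRTree.insert_edge {α : Type*} [DecidableEq α] {k : ℕ} {G : Finset (Finset α)}
    (hG : IsRTree k G) {A g : Finset α} (hg : g ∈ G) (hA : A.card = k)
    (hAg : A ∩ G.sup id ⊆ g) : IsRTree k (insert A G) := by
  obtain ⟨m, E, rfl, hE, hc⟩ := hG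
  obtain ⟨j₀, -, rfl⟩ := Finset.mem_image.1 hg
  refine ⟨m + 1, Fin.snoc E A, ?_, ?_, ?_⟩
  · ext X
    simp only [Finset.mem_insert, Finset.mem_image, Finset.mem_univ, true_and]
    rw [Fin.exists_fin_succ']
    simp only [Fin.snoc_castSucc, Fin.snoc_last]
    grind
  · intro i
    refine Fin.lastCases ?_ (fun i => ?_) i
    · intro _
      refine ⟨j₀.castSucc, Fin.castSucc_lt_last j₀, ?_⟩
      simp only [Fin.snoc_castSucc, Fin.snoc_last]
      intro x hx
      apply hAg
      simp only [Finset.mem_inter, Finset.mem_sup, Finset.mem_Iio] at hx ⊢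
      obtain ⟨hxA, j, hj, hxj⟩ := hx
      refine ⟨hxA, ?_⟩
      revert hj hxj
      refine Fin.lastCases ?_ (fun j => ?_) j
      · intro h; exact absurd h (lt_irrefl _)
      · intro _ h
        rw [Fin.snoc_castSucc] at h
        exact ⟨E j, Finset.mem_image_of_mem _ (Finset.mem_univ _), h⟩
    · intro hi
      obtain ⟨j, hj, hsub⟩ := hE i hi
      refine ⟨j.castSucc, Fin.castSucc_lt_castSucc_iff.2 hj, ?_⟩
      simp only [Fin.snoc_castSucc]
      intro x hx
      apply hsub
      simp only [Finset.mem_inter, Finset.mem_sup, Finset.mem_Iio] at hx ⊢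
      obtain ⟨hxA, l, hl, hxl⟩ := hx
      refine ⟨hxA, ?_⟩
      revert hl hxl
      refine Fin.lastCases ?_ (fun l => ?_) l
      · intro h; exact absurd h (not_lt.2 (Fin.le_last _))
      · intro hl h
        rw [Fin.snoc_castSucc] at h
        exact ⟨l, Fin.castSucc_lt_castSucc_iff.1 hl, h⟩
  · intro i
    refine Fin.lastCases ?_ (fun i => ?_) i
    · simpa using hA
    · simpa using hc i

lemma isRTree_singleton {α : Type*} [DecidableEq α] {k : ℕ} {B : Finset α}
    (hB : B.card = k) : IsRTree k {B} :=
  ⟨1, fun _ => B, by simp, fun i hi => absurd hi (by omega), fun _ => hB⟩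

/-- A tree-ordered family of sets of size at most `k` covering at least `k` vertices is dominated
by a `k`-tree on the same vertices. Only the number of covered vertices is assumed large, rather
than some set having size `k`, so that the induction needs no change of root. -/
lemma exists_rtree_of_treeOrder {α : Type*} [DecidableEq α] {k : ℕ} (hk : 0 < k) :
    ∀ (m : ℕ) (E : Fin m → Finset α), IsTreeOrder E → (∀ i, (E i).card ≤ k) →
      k ≤ (Finset.univ.sup E).card →
      ∃ G : Finset (Finset α), IsRTree k G ∧ G.sup id = Finset.univ.sup E ∧
        ∀ i, ∃ g ∈ G, E i ⊆ g := by
  intro m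
  induction m with
  | zero =>
    intro E _ _ h
    simp at h
    omega
  | succ m ih =>
    intro E hE hc hV
    set E' : Fin m → Finset α := fun i => E i.castSucc with hE'
    set V' := Finset.univ.sup E' with hV'
    set L := E (Fin.last m) with hL
    have hsup : Finset.univ.sup E = V' ∪ L := by
      ext x
      simp only [Finset.mem_sup, Finset.mem_univ, true_and, Finset.mem_union, hV', hE', hL]
      exact Fin.exists_fin_succ'
    have hEV : ∀ i, E' i ⊆ V' := fun i => Finset.le_sup (f := E') (Finset.mem_univ i)
    rw [hsup] at hV ⊢
    by_cases hcard : k ≤ V'.card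
    · have htree : IsTreeOrder E' := by
        intro i hi
        obtain ⟨j, hj, hsub⟩ := hE i.castSucc hi
        have hjm : j.1 < m := lt_trans (Fin.lt_def.1 hj) i.2
        refine ⟨⟨j.1, hjm⟩, hj, ?_⟩
        intro x hx
        apply hsub
        simp only [Finset.mem_inter, Finset.mem_sup, Finset.mem_Iio] at hx ⊢
        obtain ⟨hx1, l, hl, hx2⟩ := hx
        exact ⟨hx1, l.castSucc, Fin.castSucc_lt_castSucc_iff.2 hl, hx2⟩
      obtain ⟨G, hG, hGV, hGE⟩ := ih E' htree (fun i => hc _) hcard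
      have hm : 0 < m := by
        rcases Nat.eq_zero_or_pos m with h | h
        · subst h
          simp [hV'] at hcard
          omega
        · exact h
      obtain ⟨j, hj, hsub⟩ := hE (Fin.last m) hm
      obtain ⟨g, hg, hjg⟩ := hGE ⟨j.1, hj⟩
      have hLg : L ∩ V' ⊆ g := by
        intro x hx
        apply hjg
        apply hsub
        simp only [hV', Finset.mem_inter, Finset.mem_sup, Finset.mem_Iio] at hx ⊢
        obtain ⟨hx1, l, hl, hx2⟩ := hx
        exact ⟨hx1, l.castSucc, Fin.castSucc_lt_last l, hx2⟩
      have hgc : g.card = k := by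
        obtain ⟨n, F, rfl, _, hF⟩ := hG
        obtain ⟨a, _, rfl⟩ := Finset.mem_image.1 hg
        exact hF a
      obtain ⟨A, hLA, hAg, hAc⟩ := Finset.exists_subsuperset_card_eq
        (Finset.subset_union_left : L ⊆ L ∪ g) (hc (Fin.last m))
        (hgc ▸ Finset.card_le_card Finset.subset_union_right)
      have hgV : g ⊆ V' := (Finset.le_sup (f := id) hg).trans hGV.le
      refine ⟨insert A G, hG.insert_edge hg hAc ?_, ?_, ?_⟩
      · rw [hGV]
        intro x hx
        grind
      · rw [Finset.sup_insert, hGV]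
        ext x
        simp only [id, Finset.sup_eq_union, Finset.mem_union]
        grind
      · intro i
        refine Fin.lastCases ?_ (fun i => ?_) i
        · exact ⟨A, Finset.mem_insert_self _ _, hLA⟩
        · obtain ⟨g', hg', h⟩ := hGE i
          exact ⟨g', Finset.mem_insert_of_mem hg', h⟩
    · obtain ⟨A, hLA, hAV, hAc⟩ := Finset.exists_subsuperset_card_eq
        (Finset.subset_union_right : L ⊆ V' ∪ L) (hc (Fin.last m)) hV
      obtain ⟨B, hVB, hBV, hBc⟩ := Finset.exists_subsuperset_card_eq
        (Finset.subset_union_left : V' ⊆ V' ∪ L) (le_of_not_ge hcard) hV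
      refine ⟨{A, B}, (isRTree_singleton hBc).insert_edge (Finset.mem_singleton_self B) hAc ?_,
        ?_, ?_⟩
      · simp
      · rw [Finset.sup_insert, Finset.sup_singleton]
        exact Finset.Subset.antisymm (Finset.union_subset hAV hBV)
          (Finset.union_subset (hVB.trans Finset.subset_union_right)
            (hLA.trans Finset.subset_union_left))
      · intro i
        refine Fin.lastCases ?_ (fun i => ?_) i
        · exact ⟨A, by simp, hLA⟩
        · exact ⟨B, by simp, (hEV i).trans hVB⟩

/-- Deleting a cross-cut: if `H` is a subgraph of a `1`-reducible `r`-tree (`r ≥ 3`) and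
`S` is a cross-cut of `H`, then `H - S` is embeddable in an `(r-1)`-tree whose vertex set
equals the vertex set of `H - S`. -/
theorem deleting_a_crosscut {α : Type*} [DecidableEq α]
    (r : ℕ) (hr : 3 ≤ r)
    (T H : Finset (Finset α)) (hT : IsRTree r T) (hred : Reducible 1 T) (hHT : H ⊆ T)
    (S : Finset α) (hS : IsCrossCut H S) :
    ∃ G : Finset (Finset α), IsRTree (r - 1) G ∧
      G.sup id = (H.image (fun A => A \ S)).sup id ∧
      ContainsCopy G (H.image (fun A => A \ S)) := by
  rcases H.eq_empty_or_nonempty with rfl | ⟨A₀, hA₀⟩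
  · exact ⟨∅, ⟨0, Fin.elim0, by simp, fun i => i.elim0, fun i => i.elim0⟩, by simp,
      ⟨id, by simp, by simp⟩⟩
  obtain ⟨m, E, rfl, hE, hc⟩ := hT
  set V := (H.image (fun A => A \ S)).sup id with hV
  have memV : ∀ x, x ∈ V ↔ ∃ A ∈ H, x ∈ A ∧ x ∉ S := by
    intro x
    simp [hV, Finset.mem_sup]
  have hcard : ∀ A ∈ H, (A \ S).card = r - 1 := by
    intro A hA
    obtain ⟨i, _, rfl⟩ := Finset.mem_image.1 (hHT hA)
    have h1 := Finset.card_sdiff_add_card_inter (E i) S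
    have h2 := hS _ hA
    have h3 := hc i
    omega
  have htrace : ∀ A ∈ H, A ∩ V = A \ S := by
    intro A hA
    ext x
    simp only [Finset.mem_inter, Finset.mem_sdiff, memV]
    grind
  have hsup : Finset.univ.sup (fun i => E i ∩ V) = V := by
    ext x
    simp only [Finset.mem_sup, Finset.mem_univ, true_and, Finset.mem_inter]
    refine ⟨fun ⟨_, _, h⟩ => h, fun h => ?_⟩
    obtain ⟨A, hA, hxA, _⟩ := (memV x).1 h
    obtain ⟨i, _, rfl⟩ := Finset.mem_image.1 (hHT hA)
    exact ⟨i, hxA, h⟩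
  have htree : IsTreeOrder (fun i => E i ∩ V) := by
    intro i hi
    obtain ⟨j, hj, hsub⟩ := hE i hi
    refine ⟨j, hj, fun x hx => ?_⟩
    simp only [Finset.mem_inter, Finset.mem_sup, Finset.mem_Iio] at hx ⊢
    obtain ⟨⟨hxi, hxV⟩, l, hl, hxl, _⟩ := hx
    refine ⟨hsub ?_, hxV⟩
    simp only [Finset.mem_inter, Finset.mem_sup, Finset.mem_Iio]
    exact ⟨hxi, l, hl, hxl⟩
  have hle : ∀ i, (E i ∩ V).card ≤ r - 1 := by
    intro i
    by_cases hi : E i ∈ H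
    · rw [htrace _ hi, hcard _ hi]
    · have hiT : E i ∈ Finset.image E Finset.univ :=
        Finset.mem_image_of_mem _ (Finset.mem_univ _)
      obtain ⟨x, hx⟩ := Finset.card_pos.1 (hred _ hiT)
      obtain ⟨hxi, hdeg⟩ := Finset.mem_filter.1 hx
      have hxV : x ∉ V := by
        intro h
        obtain ⟨A, hA, hxA, _⟩ := (memV x).1 h
        have : A = E i := Finset.card_le_one.1 (le_of_eq hdeg) A
          (Finset.mem_filter.2 ⟨hHT hA, hxA⟩) (E i) (Finset.mem_filter.2 ⟨hiT, hxi⟩)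
        exact hi (this ▸ hA)
      have : E i ∩ V ⊂ E i := by
        refine ⟨Finset.inter_subset_left, fun h => hxV (Finset.mem_inter.1 (h hxi)).2⟩
      have h1 := Finset.card_lt_card this
      have h2 := hc i
      omega
  have hVcard : r - 1 ≤ V.card := by
    rw [← hcard _ hA₀, ← htrace _ hA₀]
    exact Finset.card_le_card Finset.inter_subset_right
  obtain ⟨G, hG, hGV, hGE⟩ := exists_rtree_of_treeOrder (k := r - 1) (by omega) m _ htree hle
    (by rw [hsup]; exact hVcard)
  refine ⟨G, hG, hGV.trans hsup, id, Function.injective_id.injOn, ?_⟩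
  intro X hX
  obtain ⟨A, hA, rfl⟩ := Finset.mem_image.1 hX
  obtain ⟨i, _, rfl⟩ := Finset.mem_image.1 (hHT hA)
  obtain ⟨g, hg, hsub⟩ := hGE i
  have hgc : g.card = r - 1 := by
    obtain ⟨n, F, rfl, _, hF⟩ := hG
    obtain ⟨a, _, rfl⟩ := Finset.mem_image.1 hg
    exact hF a
  -- A trace of full size contained in an edge of `G` is that edge.
  rw [htrace _ hA] at hsub
  rw [Finset.image_id, Finset.eq_of_subset_of_card_le hsub (by rw [hgc, hcard _ hA])]
  exact hg

end
end

section
/- (Missing edges versus non-M edges) Let M be an r-graph with m edges, m ≥ 2, on v vertices, and let n ≥ v. Let G be an r-graph on [n], let G̅ be its complement (the r-subsets of [n] that are not edges of G), and let G_0 be the set of edges of G that do not lie in any copy of M inside G. Then |G_0| ≤ (m−1)·|G̅|. -/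
/-!
Let `G₀` be the set of edges of `G` lying in no copy of `M` inside `G`.
Place `M` on `[n]` by a fixed injection `f` and then move it by a permutation `σ` of `[n]`. If the
moved copy uses an edge of `G₀`, it cannot lie inside `G`, so it uses at least one missing edge and
hence at most `m - 1` edges of `G₀`. Thus for every `σ` the number of `G₀`-edges in the copy is at
most `m - 1` times the number of missing edges in it.

Summing over all `σ` gives the theorem: by transitivity of the symmetric group on `r`-sets, each
`r`-set occurs as an edge of a moved copy the same positive number of times
(`hitCount_eq`, `hitCount_pos`).
-/


open Finset
open scoped Classical

noncomputable section

variable {α β : Type*}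

lemma exists_perm_image_eq {n : ℕ} {s t : Finset (Fin n)} (h : s.card = t.card) :
    ∃ σ : Equiv.Perm (Fin n), s.image σ = t := by
  let e : {x // x ∈ s} ≃ {x // x ∈ t} := Finset.equivOfCardEq h
  refine ⟨e.extendSubtype, Finset.eq_of_subset_of_card_le ?_ ?_⟩
  · intro y hy
    obtain ⟨x, hx, rfl⟩ := Finset.mem_image.1 hy
    exact e.extendSubtype_mem x hx
  · rw [Finset.card_image_of_injective _ (Equiv.injective _), h]

/-- The number of pairs `(σ, A)`, with `σ` a permutation of `[n]` and `A` an edge of `M`, such that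
the edge `f(A)` is moved onto `e` by `σ`. -/
def hitCount {α : Type*} {n : ℕ} (M : Finset (Finset α)) (f : α → Fin n)
    (e : Finset (Fin n)) : ℕ :=
  ∑ σ : Equiv.Perm (Fin n), (M.filter (fun A => (A.image f).image σ = e)).card

lemma hitCount_eq {α : Type*} {n : ℕ} (M : Finset (Finset α)) (f : α → Fin n)
    {s t : Finset (Fin n)} (h : s.card = t.card) : hitCount M f s = hitCount M f t := by
  obtain ⟨τ, rfl⟩ := exists_perm_image_eq h
  refine Fintype.sum_equiv (Equiv.mulLeft τ) _ _ fun σ => ?_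
  congr 1
  refine Finset.filter_congr fun A _ => ?_
  have key : (A.image f).image (Equiv.mulLeft τ σ) = ((A.image f).image σ).image τ := by
    rw [Finset.image_image (s := A.image f)]
    rfl
  rw [key, (Finset.image_injective τ.injective).eq_iff]

lemma hitCount_pos {α : Type*} {n : ℕ} {M : Finset (Finset α)} {f : α → Fin n}
    {A : Finset α} (hA : A ∈ M) {e : Finset (Fin n)} (h : (A.image f).card = e.card) :
    0 < hitCount M f e := by
  obtain ⟨σ, hσ⟩ := exists_perm_image_eq h
  refine Finset.sum_pos' (fun _ _ => Nat.zero_le _) ⟨σ, Finset.mem_univ _, ?_⟩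
  exact Finset.card_pos.2 ⟨A, Finset.mem_filter.2 ⟨hA, hσ⟩⟩

/-- Double counting: the incidences of moved copies with a family `X` of `r`-sets. -/
lemma sum_card_filter_mem {α : Type*} {n r N : ℕ} (M : Finset (Finset α)) (f : α → Fin n)
    (X : Finset (Finset (Fin n))) (hX : ∀ e ∈ X, e.card = r)
    (hN : ∀ e : Finset (Fin n), e.card = r → hitCount M f e = N) :
    ∑ σ : Equiv.Perm (Fin n), (M.filter (fun A => (A.image f).image σ ∈ X)).card
      = X.card * N := by
  calc _ = ∑ σ : Equiv.Perm (Fin n), ∑ e ∈ X,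
        (M.filter (fun A => (A.image f).image σ = e)).card := by
        refine Finset.sum_congr rfl fun σ _ => ?_
        have hmaps : Set.MapsTo (fun A : Finset α => (A.image f).image σ)
            (M.filter (fun A => (A.image f).image σ ∈ X)) X :=
          fun A hA => (Finset.mem_filter.1 hA).2
        rw [Finset.card_eq_sum_card_fiberwise hmaps]
        refine Finset.sum_congr rfl fun e he => ?_
        congr 1
        ext A
        simp only [Finset.mem_filter]
        constructor
        · rintro ⟨⟨h1, _⟩, h3⟩
          exact ⟨h1, h3⟩
        · rintro ⟨h1, h3⟩
          exact ⟨⟨h1, h3 ▸ he⟩, h3⟩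
    _ = ∑ e ∈ X, hitCount M f e := Finset.sum_comm
    _ = X.card * N := by
        rw [Finset.sum_congr rfl fun e he => hN e (hX e he)]
        simp

/-- Missing edges versus non-`M` edges: if `M` is an `r`-graph with `m ≥ 2` edges on `v`
vertices, `n ≥ v`, and `G` is an `r`-graph on `[n]`, then the number of edges of `G`
lying in no copy of `M` inside `G` is at most `(m-1)` times the number of `r`-subsets of
`[n]` not in `G`. -/
theorem missing_vs_nonM_edges {α : Type*} [DecidableEq α]
    (r m v n : ℕ) (hm : 2 ≤ m)
    (M : Finset (Finset α)) (hMr : ∀ A ∈ M, A.card = r) (hMm : M.card = m)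
    (hv : (M.sup id).card = v) (hn : v ≤ n)
    (G : Finset (Finset (Fin n))) (hG : ∀ A ∈ G, A.card = r) :
    (G.filter (fun e => ¬ ∃ f : α → Fin n, Set.InjOn f ↑(M.sup id) ∧
        (∀ A ∈ M, A.image f ∈ G) ∧ ∃ A ∈ M, A.image f = e)).card
      ≤ (m - 1) *
        (Finset.univ.filter (fun A : Finset (Fin n) => A.card = r ∧ A ∉ G)).card := by
  have hMne : M.Nonempty := Finset.card_pos.1 (by omega)
  -- For `n = 0` the only possible edge is `∅`, contradicting `2 ≤ m`.
  have hn0 : 0 < n := by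
    by_contra h0
    have hv0 : M.sup id = ∅ := Finset.card_eq_zero.1 (by omega)
    have hsub : M ⊆ {∅} := fun A hA => by
      have hle : A ⊆ M.sup id := Finset.le_sup (f := id) hA
      rw [hv0] at hle
      exact Finset.mem_singleton.2 (Finset.subset_empty.1 hle)
    have := Finset.card_le_card hsub
    simp only [Finset.card_singleton] at this
    omega
  have : Nonempty (Fin n) := ⟨⟨0, hn0⟩⟩
  obtain ⟨f, -, hf⟩ : ∃ f : α → Fin n, (↑(M.sup id) : Set α) ⊆ f ⁻¹' Set.univ ∧
      Set.InjOn f ↑(M.sup id) := by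
    refine (Finset.finite_toSet _).exists_injOn_of_encard_le ?_
    rw [Set.encard_coe_eq_coe_finsetCard, Set.encard_univ, ENat.card_eq_coe_fintype_card,
      Fintype.card_fin, hv]
    exact_mod_cast hn
  have hcard : ∀ A ∈ M, (A.image f).card = r := fun A hA => by
    have hle : A ⊆ M.sup id := Finset.le_sup (f := id) hA
    rw [Finset.card_image_of_injOn (hf.mono (Finset.coe_subset.2 hle)), hMr A hA]
  obtain ⟨A₀, hA₀⟩ := hMne
  have hN : ∀ e : Finset (Fin n), e.card = r → hitCount M f e = hitCount M f (A₀.image f) :=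
    fun e he => hitCount_eq M f (he.trans (hcard A₀ hA₀).symm)
  have hNpos : 0 < hitCount M f (A₀.image f) := hitCount_pos hA₀ rfl
  set G₀ := G.filter (fun e => ¬ ∃ f : α → Fin n, Set.InjOn f ↑(M.sup id) ∧
        (∀ A ∈ M, A.image f ∈ G) ∧ ∃ A ∈ M, A.image f = e) with hG₀
  set C := Finset.univ.filter (fun A : Finset (Fin n) => A.card = r ∧ A ∉ G) with hC
  have hG₀r : ∀ e ∈ G₀, e.card = r := fun e he => hG e (Finset.mem_filter.1 he).1
  have hCr : ∀ e ∈ C, e.card = r := fun e he => (Finset.mem_filter.1 he).2.1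
  have hσ : ∀ σ : Equiv.Perm (Fin n),
      (M.filter (fun A => (A.image f).image σ ∈ G₀)).card
        ≤ (m - 1) * (M.filter (fun A => (A.image f).image σ ∈ C)).card := by
    intro σ
    rcases (M.filter (fun A => (A.image f).image σ ∈ G₀)).eq_empty_or_nonempty with h | ⟨A, hA⟩
    · rw [h]
      simp
    obtain ⟨hAM, hAG⟩ := Finset.mem_filter.1 hA
    obtain ⟨B, hBM, hBG⟩ : ∃ B ∈ M, (B.image f).image σ ∉ G := by
      by_contra! hall
      refine (Finset.mem_filter.1 hAG).2 ⟨σ ∘ f, σ.injective.comp_injOn hf, ?_, A, hAM, ?_⟩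
      · intro B hB
        rw [← Finset.image_image]
        exact hall B hB
      · rw [← Finset.image_image]
    have hBC : (B.image f).image σ ∈ C := by
      refine Finset.mem_filter.2 ⟨Finset.mem_univ _, ?_, hBG⟩
      rw [Finset.card_image_of_injective _ σ.injective, hcard B hBM]
    have hle : (M.filter (fun A => (A.image f).image σ ∈ G₀)).card ≤ m - 1 := by
      rw [← hMm, ← Finset.card_erase_of_mem hBM]
      refine Finset.card_le_card fun D hD => ?_
      obtain ⟨hDM, hDG⟩ := Finset.mem_filter.1 hD
      refine Finset.mem_erase.2 ⟨?_, hDM⟩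
      rintro rfl
      exact hBG (Finset.mem_filter.1 hDG).1
    have hpos : 0 < (M.filter (fun A => (A.image f).image σ ∈ C)).card :=
      Finset.card_pos.2 ⟨B, Finset.mem_filter.2 ⟨hBM, hBC⟩⟩
    exact hle.trans (Nat.le_mul_of_pos_right _ hpos)
  have hsum := Finset.sum_le_sum fun σ (_ : σ ∈ (Finset.univ : Finset (Equiv.Perm (Fin n)))) => hσ σ
  rw [← Finset.mul_sum, sum_card_filter_mem M f G₀ hG₀r hN, sum_card_filter_mem M f C hCr hN,
    ← mul_assoc] at hsum
  exact Nat.le_of_mul_le_mul_right hsum hNpos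

end
end
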